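/- Let X^J_n be a Markov chain on a Polish space 𝒳 with kernel p, Δ_n i.i.d. Exp(λ) holding times independent of the chain, J_n = Σ_{k<n} Δ_k the jump times, and X_t the associated pure-jump process. Then for any measurable F: 𝒳 → [0,∞] and t ≥ 0: Σ_{n≥0} E[F(X^J_n) 1_{J_{n+1} ≤ t}] = λ E[∫₀^t F(X_s) ds]. -/

import Mathlib

/-
Memorylessness of an `Exp(lam)` variable `Δ` is the identity `lam * E[(Δ ∧ u)⁺] = P(Δ ≤ u)` for
every real `u`. Since `Δ_n` is independent of `(X^J_n, J_n)`, it may be applied with `u = t - J_n`: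
`E[F(X^J_n); J_{n+1} ≤ t]` is `lam` times the expected integral of `F(X_s)` over the part of the
holding interval `[J_n, J_{n+1})` before `t`. For `F = 1` these integrals add up to at most `t`,
so `∑ P(J_{n+1} ≤ t) ≤ lam * t`, and by Borel–Cantelli the jump times tend to infinity almost
surely. Hence the holding intervals cover `[0, t)`, and summing over `n` gives the identity.
-/

open MeasureTheory ProbabilityTheory ENNReal Classical

/-- The `n`-step path measure of a Markov chain with initial distribution `μ` and
one-step transition kernel `p`. -/
noncomputable def pathMeasure {𝒳 : Type*} [MeasurableSpace 𝒳] (μ : Measure 𝒳)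
    (p : Kernel 𝒳 𝒳) : (n : ℕ) → Measure (Fin (n + 1) → 𝒳)
  | 0 => μ.map (fun x => fun _ => x)
  | n + 1 => (pathMeasure μ p n).bind
      (fun ω => (p (ω (Fin.last n))).map (fun y => Fin.snoc ω y))

/-- Jump times: `J n ω` is the sum of the first `n` holding times. -/
noncomputable def jumpTime {𝒳 : Type*} (n : ℕ) (ω : ℕ → 𝒳 × ℝ) : ℝ :=
  ∑ k ∈ Finset.range n, (ω k).2

/-- The pure-jump process: `X t ω` is the chain state at the last jump before time `t`. -/
noncomputable def jumpProc {𝒳 : Type*} (t : ℝ) (ω : ℕ → 𝒳 × ℝ) : 𝒳 :=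
  (ω (sSup {n : ℕ | jumpTime n ω ≤ t})).1

/-- The transition kernel of the embedded jump chain:
`p^J((x,s),·) = p(x,dy) × Exp(lam)`. -/
noncomputable def jumpKernel {𝒳 : Type*} [MeasurableSpace 𝒳] (lam : ℝ)
    (p : Kernel 𝒳 𝒳) [IsSFiniteKernel p] : Kernel (𝒳 × ℝ) (𝒳 × ℝ) :=
  (p.comap Prod.fst measurable_fst) ×ₖ (Kernel.const (𝒳 × ℝ) (ProbabilityTheory.expMeasure lam))

section

open Set Filter

section MonotoneSequence

variable {f : ℕ → ℝ}

lemma pairwise_disjoint_Ico_min_succ (hf : Monotone f) (t : ℝ) :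
    Pairwise (Function.onFun Disjoint fun n ↦ Ico (f n) (min (f (n + 1)) t)) :=
  hf.pairwise_disjoint_on_Ico_succ.mono fun _ _ h ↦
    h.mono (Ico_subset_Ico_right (min_le_left _ _)) (Ico_subset_Ico_right (min_le_left _ _))

lemma iUnion_Ico_min_succ (hf : Monotone f) (htop : Tendsto f atTop atTop) (t : ℝ) :
    ⋃ n, Ico (f n) (min (f (n + 1)) t) = Ico (f 0) t := by
  have hcover : ⋃ n, Ico (f n) (f (n + 1)) = Ici (f 0) :=
    iUnion_Ico_map_succ_eq_Ici (fun n ↦ hf n.zero_le)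
      (not_bddAbove_of_tendsto_atTop htop)
  simp only [← Ico_inter_Iio, ← iUnion_inter, hcover, Ici_inter_Iio]

lemma tsum_ofReal_min_succ_sub_le (hf : Monotone f) (t : ℝ) :
    ∑' n, ENNReal.ofReal (min (f (n + 1)) t - f n) ≤ ENNReal.ofReal (t - f 0) := by
  simp only [← Real.volume_Ico]
  rw [← measure_iUnion (pairwise_disjoint_Ico_min_succ hf t) fun _ ↦ measurableSet_Ico]
  exact measure_mono <| iUnion_subset fun n ↦ Ico_subset_Ico (hf n.zero_le) (min_le_right _ _)

end MonotoneSequence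

section JumpPath

variable {𝒳 : Type*} {ω : ℕ → 𝒳 × ℝ}

lemma jumpTime_zero (ω : ℕ → 𝒳 × ℝ) : jumpTime 0 ω = 0 := by
  simp [jumpTime]

lemma jumpTime_succ (n : ℕ) (ω : ℕ → 𝒳 × ℝ) :
    jumpTime (n + 1) ω = jumpTime n ω + (ω n).2 :=
  Finset.sum_range_succ _ n

lemma monotone_jumpTime (hω : ∀ n, 0 ≤ (ω n).2) : Monotone fun n ↦ jumpTime n ω :=
  monotone_nat_of_le_succ fun n ↦ by
    simpa only [jumpTime_succ] using le_add_of_nonneg_right (hω n)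

lemma jumpProc_eq_of_mem_Ico (hω : ∀ n, 0 ≤ (ω n).2) {n : ℕ} {s : ℝ}
    (hs : s ∈ Ico (jumpTime n ω) (jumpTime (n + 1) ω)) : jumpProc s ω = (ω n).1 := by
  have hjumps : {k | jumpTime k ω ≤ s} = Iic n := by
    ext k
    refine ⟨fun hk ↦ ?_, fun hk ↦ (monotone_jumpTime hω hk).trans hs.1⟩
    exact Nat.lt_succ_iff.mp ((monotone_jumpTime hω).reflect_lt (hk.trans_lt hs.2))
  rw [jumpProc, hjumps, csSup_Iic]

lemma lintegral_jumpProc (hω : ∀ n, 0 ≤ (ω n).2)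
    (htop : Tendsto (fun n ↦ jumpTime n ω) atTop atTop) (F : 𝒳 → ℝ≥0∞) (t : ℝ) :
    ∫⁻ s in Icc 0 t, F (jumpProc s ω) =
      ∑' n, F (ω n).1 * ENNReal.ofReal (min (jumpTime (n + 1) ω) t - jumpTime n ω) := by
  have hmono := monotone_jumpTime hω
  calc ∫⁻ s in Icc 0 t, F (jumpProc s ω)
    _ = ∫⁻ s in ⋃ n, Ico (jumpTime n ω) (min (jumpTime (n + 1) ω) t), F (jumpProc s ω) := by
      rw [iUnion_Ico_min_succ hmono htop t, jumpTime_zero]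
      exact setLIntegral_congr Ico_ae_eq_Icc.symm
    _ = ∑' n, ∫⁻ s in Ico (jumpTime n ω) (min (jumpTime (n + 1) ω) t), F (jumpProc s ω) :=
      lintegral_iUnion (fun _ ↦ measurableSet_Ico) (pairwise_disjoint_Ico_min_succ hmono t) _
    _ = ∑' n, ∫⁻ _ in Ico (jumpTime n ω) (min (jumpTime (n + 1) ω) t), F (ω n).1 :=
      tsum_congr fun n ↦ setLIntegral_congr_fun measurableSet_Ico fun s hs ↦ by
        rw [jumpProc_eq_of_mem_Ico hω ⟨hs.1, hs.2.trans_le (min_le_left _ _)⟩]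
    _ = _ := by simp only [setLIntegral_const, Real.volume_Ico]

end JumpPath

section Exponential

variable {lam : ℝ}

lemma ae_expMeasure_nonneg (lam : ℝ) : ∀ᵐ d ∂expMeasure lam, 0 ≤ d := by
  have hIio : expMeasure lam (Iio 0) = 0 :=
    (withDensity_apply _ measurableSet_Iio).trans (lintegral_exponentialPDF_of_nonpos le_rfl)
  simp only [ae_iff, not_le]
  exact hIio

lemma ofReal_mul_expMeasure_Ioi (hlam : 0 < lam) {u : ℝ} (hu : 0 ≤ u) :
    ENNReal.ofReal lam * expMeasure lam (Ioi u) = exponentialPDF lam u := by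
  have := isProbabilityMeasure_expMeasure hlam
  have htail : (expMeasure lam).real (Ioi u) = Real.exp (-(lam * u)) := by
    rw [← compl_Iic, probReal_compl_eq_one_sub measurableSet_Iic, ← cdf_eq_real,
      cdf_expMeasure_eq hlam, if_pos hu, sub_sub_self]
  rw [← ofReal_measureReal, htail, ← ENNReal.ofReal_mul hlam.le, exponentialPDF_of_nonneg hu]

-- Both sides vanish for `u < 0`, so `u` may be the time left before a horizon already passed.
lemma ofReal_mul_lintegral_min_expMeasure (hlam : 0 < lam) (u : ℝ) :
    ENNReal.ofReal lam * ∫⁻ d, ENNReal.ofReal (min d u) ∂expMeasure lam =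
      expMeasure lam (Iic u) :=
  calc ENNReal.ofReal lam * ∫⁻ d, ENNReal.ofReal (min d u) ∂expMeasure lam
    _ = ENNReal.ofReal lam * ∫⁻ d, ENNReal.ofReal (max (min d u) 0) ∂expMeasure lam := by
      simp
    _ = ENNReal.ofReal lam * ∫⁻ s in Ioi 0, expMeasure lam {d | s < max (min d u) 0} := by
      rw [lintegral_eq_lintegral_meas_lt _ (f := fun d ↦ max (min d u) 0)
        (ae_of_all _ fun _ ↦ le_max_right _ _) (by fun_prop)]
    _ = ∫⁻ s in Ioi 0, (Iio u).indicator (exponentialPDF lam) s := by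
      rw [← lintegral_const_mul' _ _ ENNReal.ofReal_ne_top]
      refine setLIntegral_congr_fun measurableSet_Ioi fun s hs ↦ ?_
      by_cases hsu : s < u
      · have htail : {d | s < max (min d u) 0} = Ioi s := by
          ext d
          simp [hsu, not_lt.mpr (mem_Ioi.mp hs).le]
        simp only [htail, ofReal_mul_expMeasure_Ioi hlam (mem_Ioi.mp hs).le, mem_Iio, hsu,
          indicator_of_mem]
      · simp [hsu, not_lt.mpr (mem_Ioi.mp hs).le]
    _ = ∫⁻ s in Iic u, exponentialPDF lam s := by
      rw [← lintegral_indicator measurableSet_Ioi, ← lintegral_indicator measurableSet_Iic]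
      refine lintegral_congr_ae ?_
      filter_upwards [Measure.ae_ne volume 0, Measure.ae_ne volume u] with s hs0 hsu
      rcases hs0.lt_or_gt with hneg | hpos
      · simp [indicator_apply, exponentialPDF_of_neg hneg]
      · simp [indicator_apply, hpos, hsu.le_iff_lt]
    _ = expMeasure lam (Iic u) := (withDensity_apply _ measurableSet_Iic).symm

end Exponential

section Independence

variable {Ω 𝒴 𝒵 : Type*} [MeasurableSpace Ω] [MeasurableSpace 𝒴] [MeasurableSpace 𝒵]
  {P : Measure Ω} {ν : Measure 𝒵} {Y : Ω → 𝒴} {Z : Ω → 𝒵}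

lemma lintegral_comp_prodMk_of_indepFun [IsFiniteMeasure P] [SFinite ν] (hY : AEMeasurable Y P)
    (hZ : HasLaw Z ν P) (hYZ : IndepFun Y Z P) {f : 𝒴 × 𝒵 → ℝ≥0∞} (hf : Measurable f) :
    ∫⁻ ω, f (Y ω, Z ω) ∂P = ∫⁻ ω, ∫⁻ z, f (Y ω, z) ∂ν ∂P := by
  have hlaw : HasLaw (fun ω ↦ (Y ω, Z ω)) ((P.map Y).prod ν) P :=
    IndepFun.hasLaw_prod ⟨hY, rfl⟩ hZ hYZ
  rw [hlaw.lintegral_comp hf.aemeasurable, lintegral_prod _ hf.aemeasurable,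
    lintegral_map' hf.lintegral_prod_right'.aemeasurable hY]

lemma hasLaw_and_indepFun_of_hasLaw_prod [IsProbabilityMeasure P] [IsProbabilityMeasure ν]
    {ρ : Measure 𝒴} (h : HasLaw (fun ω ↦ (Y ω, Z ω)) (ρ.prod ν) P) :
    HasLaw Z ν P ∧ IndepFun Y Z P := by
  have hfst : HasLaw Prod.fst ρ (ρ.prod ν) := ⟨by fun_prop, Measure.fst_prod⟩
  have hY : HasLaw Y ρ P := hfst.comp h
  have := hY.isProbabilityMeasure_iff.mp ‹_›
  have hsnd : HasLaw Prod.snd ν (ρ.prod ν) := ⟨by fun_prop, Measure.snd_prod⟩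
  have hZ : HasLaw Z ν P := hsnd.comp h
  exact ⟨hZ, (indepFun_iff_hasLaw_prodMk_prod hY hZ).mpr h⟩

end Independence

section ExpHoldingTimes

variable {𝒳 : Type*} [MeasurableSpace 𝒳] {lam : ℝ} {P : Measure (ℕ → 𝒳 × ℝ)}

lemma measurable_jumpTime (n : ℕ) : Measurable fun ω : ℕ → 𝒳 × ℝ ↦ jumpTime n ω := by
  unfold jumpTime
  fun_prop

/-- Under `P`, each holding time `Δ_n` is exponential with rate `lam` and independent of the pair
`(X^J_n, J_n)` of the current state and jump time. -/
structure HasExpHoldingTimes (lam : ℝ) (P : Measure (ℕ → 𝒳 × ℝ)) : Prop where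
  hasLaw (n : ℕ) : HasLaw (fun ω ↦ (ω n).2) (expMeasure lam) P
  indepFun (n : ℕ) : IndepFun (fun ω ↦ ((ω n).1, jumpTime n ω)) (fun ω ↦ (ω n).2) P

namespace HasExpHoldingTimes

lemma isProbabilityMeasure (h : HasExpHoldingTimes lam P) (hlam : 0 < lam) :
    IsProbabilityMeasure P :=
  (h.hasLaw 0).isProbabilityMeasure_iff.mpr (isProbabilityMeasure_expMeasure hlam)

lemma ae_nonneg (h : HasExpHoldingTimes lam P) : ∀ᵐ ω ∂P, ∀ n, 0 ≤ (ω n).2 :=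
  ae_all_iff.mpr fun n ↦
    ((h.hasLaw n).ae_iff (p := fun d ↦ 0 ≤ d) (by fun_prop)).mpr (ae_expMeasure_nonneg lam)

lemma lintegral_comp (h : HasExpHoldingTimes lam P) (hlam : 0 < lam) (n : ℕ)
    {f : (𝒳 × ℝ) × ℝ → ℝ≥0∞} (hf : Measurable f) :
    ∫⁻ ω, f (((ω n).1, jumpTime n ω), (ω n).2) ∂P =
      ∫⁻ ω, ∫⁻ d, f (((ω n).1, jumpTime n ω), d) ∂expMeasure lam ∂P := by
  have := isProbabilityMeasure_expMeasure hlam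
  have := h.isProbabilityMeasure hlam
  have hpair : Measurable fun ω : ℕ → 𝒳 × ℝ ↦ ((ω n).1, jumpTime n ω) :=
    (by fun_prop : Measurable fun ω : ℕ → 𝒳 × ℝ ↦ (ω n).1).prodMk (measurable_jumpTime n)
  exact lintegral_comp_prodMk_of_indepFun hpair.aemeasurable (h.hasLaw n) (h.indepFun n) hf

lemma lintegral_ite_jumpTime_succ (h : HasExpHoldingTimes lam P) (hlam : 0 < lam)
    {F : 𝒳 → ℝ≥0∞} (hF : Measurable F) (t : ℝ) (n : ℕ) :
    ∫⁻ ω, (if jumpTime (n + 1) ω ≤ t then F (ω n).1 else 0) ∂P =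
      ENNReal.ofReal lam *
        ∫⁻ ω, F (ω n).1 * ENNReal.ofReal (min (jumpTime (n + 1) ω) t - jumpTime n ω) ∂P := by
  have hjumped : Measurable fun q : (𝒳 × ℝ) × ℝ ↦ if q.1.2 + q.2 ≤ t then F q.1.1 else 0 :=
    Measurable.ite (measurableSet_le (by fun_prop) (by fun_prop)) (by fun_prop) (by fun_prop)
  have hstayed : Measurable fun q : (𝒳 × ℝ) × ℝ ↦
      F q.1.1 * ENNReal.ofReal (min (q.1.2 + q.2) t - q.1.2) := by fun_prop
  have hexp (x : 𝒳) (j : ℝ) : ∫⁻ d, (if j + d ≤ t then F x else 0) ∂expMeasure lam =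
      ENNReal.ofReal lam * ∫⁻ d, F x * ENNReal.ofReal (min (j + d) t - j) ∂expMeasure lam := by
    have hind (d : ℝ) :
        (if j + d ≤ t then F x else 0) = (Iic (t - j)).indicator (fun _ ↦ F x) d := by
      simp only [indicator_apply, mem_Iic, le_sub_iff_add_le']
    have hmin (d : ℝ) : min (j + d) t - j = min d (t - j) := by
      rw [← min_sub_sub_right, add_sub_cancel_left]
    simp only [hind, hmin]
    rw [lintegral_indicator_const measurableSet_Iic, ← ofReal_mul_lintegral_min_expMeasure hlam,
      lintegral_const_mul _ (by fun_prop), mul_left_comm]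
  simp only [jumpTime_succ]
  rw [h.lintegral_comp hlam n hjumped, h.lintegral_comp hlam n hstayed,
    ← lintegral_const_mul' _ _ ENNReal.ofReal_ne_top]
  exact lintegral_congr fun ω ↦ hexp _ _

lemma tsum_lintegral_ite_jumpTime_succ (h : HasExpHoldingTimes lam P) (hlam : 0 < lam)
    {F : 𝒳 → ℝ≥0∞} (hF : Measurable F) (t : ℝ) :
    ∑' n, ∫⁻ ω, (if jumpTime (n + 1) ω ≤ t then F (ω n).1 else 0) ∂P =
      ENNReal.ofReal lam * ∫⁻ ω, ∑' n,
        F (ω n).1 * ENNReal.ofReal (min (jumpTime (n + 1) ω) t - jumpTime n ω) ∂P := by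
  have hmeas (n : ℕ) : Measurable fun ω : ℕ → 𝒳 × ℝ ↦
      F (ω n).1 * ENNReal.ofReal (min (jumpTime (n + 1) ω) t - jumpTime n ω) := by
    have := measurable_jumpTime (𝒳 := 𝒳)
    fun_prop
  simp only [h.lintegral_ite_jumpTime_succ hlam hF]
  rw [ENNReal.tsum_mul_left, lintegral_tsum fun n ↦ (hmeas n).aemeasurable]

lemma tsum_measure_jumpTime_succ_le_le (h : HasExpHoldingTimes lam P) (hlam : 0 < lam) (t : ℝ) :
    ∑' n, P {ω | jumpTime (n + 1) ω ≤ t} ≤ ENNReal.ofReal lam * ENNReal.ofReal t := by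
  have := h.isProbabilityMeasure hlam
  calc ∑' n, P {ω | jumpTime (n + 1) ω ≤ t}
    _ = ∑' n, ∫⁻ ω, (if jumpTime (n + 1) ω ≤ t then 1 else 0) ∂P :=
      tsum_congr fun n ↦ by
        rw [← lintegral_indicator_one (measurableSet_le (measurable_jumpTime _) measurable_const)]
        simp only [indicator_apply, mem_ofPred_eq, Pi.one_apply]
    _ = ENNReal.ofReal lam *
        ∫⁻ ω, ∑' n, 1 * ENNReal.ofReal (min (jumpTime (n + 1) ω) t - jumpTime n ω) ∂P :=
      h.tsum_lintegral_ite_jumpTime_succ hlam (F := fun _ ↦ 1) measurable_const t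
    _ ≤ ENNReal.ofReal lam * ∫⁻ _, ENNReal.ofReal t ∂P := by
      refine mul_le_mul' le_rfl (lintegral_mono_ae ?_)
      filter_upwards [h.ae_nonneg] with ω hω
      simpa only [one_mul, jumpTime_zero, sub_zero] using
        tsum_ofReal_min_succ_sub_le (monotone_jumpTime hω) t
    _ = ENNReal.ofReal lam * ENNReal.ofReal t := by simp

lemma ae_tendsto_jumpTime_atTop (h : HasExpHoldingTimes lam P) (hlam : 0 < lam) :
    ∀ᵐ ω ∂P, Tendsto (fun n ↦ jumpTime n ω) atTop atTop := by
  have hfinite : ∀ᵐ ω ∂P, ∀ m : ℕ, {n | jumpTime (n + 1) ω ≤ m}.Finite :=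
    ae_all_iff.mpr fun m ↦ ae_finite_setOfPred_mem <| ne_top_of_le_ne_top
      (ENNReal.mul_ne_top ENNReal.ofReal_ne_top ENNReal.ofReal_ne_top)
      (h.tsum_measure_jumpTime_succ_le_le hlam m)
  filter_upwards [h.ae_nonneg, hfinite] with ω hω hfin
  refine tendsto_atTop_atTop_of_monotone' (monotone_jumpTime hω) fun ⟨b, hb⟩ ↦ ?_
  obtain ⟨m, hm⟩ := exists_nat_ge b
  have hall : {n | jumpTime (n + 1) ω ≤ m} = univ :=
    eq_univ_of_forall fun n ↦ (hb ⟨n + 1, rfl⟩).trans hm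
  exact infinite_univ (hall ▸ hfin m)

end HasExpHoldingTimes

theorem jump_process_time_integral_general (hlam : 0 < lam) (h : HasExpHoldingTimes lam P)
    {F : 𝒳 → ℝ≥0∞} (hF : Measurable F) (t : ℝ) :
    ∑' n : ℕ, ∫⁻ ω, (if jumpTime (n + 1) ω ≤ t then F ((ω n).1) else 0) ∂P =
      ENNReal.ofReal lam * ∫⁻ ω, (∫⁻ s in Icc (0 : ℝ) t, F (jumpProc s ω)) ∂P := by
  rw [h.tsum_lintegral_ite_jumpTime_succ hlam hF]
  congr 1
  refine lintegral_congr_ae ?_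
  filter_upwards [h.ae_nonneg, h.ae_tendsto_jumpTime_atTop hlam] with ω hω htop
  exact (lintegral_jumpProc hω htop F t).symm

end ExpHoldingTimes

section PathMeasure

variable {𝒴 : Type*} [MeasurableSpace 𝒴] {μ : Measure 𝒴} {κ : Kernel 𝒴 𝒴}

lemma measurable_finSnoc (n : ℕ) :
    Measurable fun q : (Fin n → 𝒴) × 𝒴 ↦ (Fin.snoc q.1 q.2 : Fin (n + 1) → 𝒴) := by
  refine measurable_pi_iff.mpr fun i ↦ ?_
  induction i using Fin.lastCases with
  | last => simpa only [Fin.snoc_last] using measurable_snd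
  | cast i =>
    simp only [Fin.snoc_castSucc]
    exact (measurable_pi_apply i).comp measurable_fst

lemma pathMeasure_succ [IsSFiniteKernel κ] (n : ℕ) [SFinite (pathMeasure μ κ n)] :
    pathMeasure μ κ (n + 1) =
      (pathMeasure μ κ n ⊗ₘ κ.comap (fun v ↦ v (Fin.last n)) (measurable_pi_apply _)).map
        fun q ↦ Fin.snoc q.1 q.2 := by
  have hsnoc := measurable_finSnoc (𝒴 := 𝒴) (n + 1)
  have hmap (v : Fin (n + 1) → 𝒴) {s : Set (Fin (n + 2) → 𝒴)} (hs : MeasurableSet s) :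
      (κ (v (Fin.last n))).map (fun y ↦ (Fin.snoc v y : Fin (n + 2) → 𝒴)) s =
        κ.comap (fun v ↦ v (Fin.last n)) (measurable_pi_apply _) v
          (Prod.mk v ⁻¹' ((fun q ↦ Fin.snoc q.1 q.2) ⁻¹' s)) :=
    Measure.map_apply (hsnoc.comp measurable_prodMk_left) hs
  have hmeas : Measurable fun v : Fin (n + 1) → 𝒴 ↦
      (κ (v (Fin.last n))).map fun y ↦ (Fin.snoc v y : Fin (n + 2) → 𝒴) :=
    Measure.measurable_of_measurable_coe _ fun s hs ↦ by
      simp only [hmap _ hs]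
      exact Kernel.measurable_kernel_prodMk_left (hsnoc hs)
  ext s hs
  rw [pathMeasure, Measure.bind_apply hs hmeas.aemeasurable, Measure.map_apply hsnoc hs,
    Measure.compProd_apply (hsnoc hs)]
  exact lintegral_congr fun v ↦ hmap v hs

instance sFinite_pathMeasure [SFinite μ] [IsSFiniteKernel κ] (n : ℕ) :
    SFinite (pathMeasure μ κ n) := by
  induction n with
  | zero => unfold pathMeasure; infer_instance
  | succ n ih => rw [pathMeasure_succ]; infer_instance

lemma hasLaw_pathMeasure_succ [SFinite μ] [IsSFiniteKernel κ] (n : ℕ) :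
    HasLaw (fun v ↦ (Fin.init v, v (Fin.last (n + 1))))
      (pathMeasure μ κ n ⊗ₘ κ.comap (fun v ↦ v (Fin.last n)) (measurable_pi_apply _))
      (pathMeasure μ κ (n + 1)) where
  aemeasurable := by unfold Fin.init; fun_prop
  map_eq := by
    rw [pathMeasure_succ, Measure.map_map (by unfold Fin.init; fun_prop) (measurable_finSnoc _)]
    simp [Function.comp_def]

end PathMeasure

section JumpChain

lemma map_compProd_prod_const {α β γ : Type*} [MeasurableSpace α] [MeasurableSpace β]
    [MeasurableSpace γ] (μ : Measure α) [SFinite μ] (η : Kernel α β) [IsSFiniteKernel η]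
    (ν : Measure γ) [SFinite ν] :
    (μ ⊗ₘ (η ×ₖ Kernel.const α ν)).map MeasurableEquiv.prodAssoc.symm = (μ ⊗ₘ η).prod ν := by
  have hkernel : η ×ₖ Kernel.const α ν = η ⊗ₖ Kernel.const (α × β) ν := by
    ext a s hs
    rw [Kernel.prod_apply' _ _ _ hs, Kernel.compProd_apply hs]
    rfl
  rw [hkernel, Measure.compProd_assoc, Measure.compProd_const]

variable {𝒳 : Type*} [MeasurableSpace 𝒳] {lam : ℝ} {P : Measure (ℕ → 𝒳 × ℝ)} {π : Measure 𝒳}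
  [SFinite π] {p : Kernel 𝒳 𝒳} [IsSFiniteKernel p]

lemma comap_jumpKernel {α : Type*} [MeasurableSpace α] [SFinite (expMeasure lam)] {g : α → 𝒳 × ℝ}
    (hg : Measurable g) :
    (jumpKernel lam p).comap g hg =
      p.comap (fun a ↦ (g a).1) hg.fst ×ₖ Kernel.const α (expMeasure lam) :=
  Kernel.comap_prod _ _ hg

lemma exists_hasLaw_prod_expMeasure_pathMeasure (hlam : 0 < lam) (n : ℕ) :
    ∃ ρ : Measure ((Fin n → 𝒳 × ℝ) × 𝒳),
      HasLaw (fun v ↦ ((Fin.init v, (v (Fin.last n)).1), (v (Fin.last n)).2))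
        (ρ.prod (expMeasure lam)) (pathMeasure (π.prod (expMeasure lam)) (jumpKernel lam p) n) := by
  have := isProbabilityMeasure_expMeasure hlam
  have : IsSFiniteKernel (jumpKernel lam p) := by unfold jumpKernel; infer_instance
  cases n with
  | zero =>
    refine ⟨π.map fun x ↦ (Fin.elim0, x), by unfold Fin.init; fun_prop, ?_⟩
    rw [pathMeasure, Measure.map_map (by unfold Fin.init; fun_prop) (by fun_prop)]
    have hinit (x : 𝒳 × ℝ) : ((Fin.init fun _ : Fin 1 ↦ x, x.1), x.2) =
        Prod.map (fun y : 𝒳 ↦ ((Fin.elim0 : Fin 0 → 𝒳 × ℝ), y)) id x :=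
      Prod.ext (Prod.ext (Subsingleton.elim _ _) rfl) rfl
    simp only [Function.comp_def, hinit]
    rw [← Measure.map_prod_map _ _ (by fun_prop) measurable_id, Measure.map_id]
  | succ n =>
    let q : Kernel (Fin (n + 1) → 𝒳 × ℝ) 𝒳 := p.comap (fun v ↦ (v (Fin.last n)).1) (by fun_prop)
    have hlaw := hasLaw_pathMeasure_succ (μ := π.prod (expMeasure lam)) (κ := jumpKernel lam p) n
    have hassoc : HasLaw MeasurableEquiv.prodAssoc.symm
        ((pathMeasure (π.prod (expMeasure lam)) (jumpKernel lam p) n ⊗ₘ q).prod (expMeasure lam))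
        (pathMeasure (π.prod (expMeasure lam)) (jumpKernel lam p) n ⊗ₘ
          (jumpKernel lam p).comap (fun v ↦ v (Fin.last n)) (measurable_pi_apply _)) :=
      ⟨by fun_prop, by rw [comap_jumpKernel, map_compProd_prod_const]⟩
    exact ⟨_, hassoc.comp hlaw⟩

theorem hasExpHoldingTimes_of_map_eq_pathMeasure [IsProbabilityMeasure P] (hlam : 0 < lam)
    (HP : ∀ n : ℕ, P.map (fun ω (i : Fin (n + 1)) ↦ ω i) =
      pathMeasure (π.prod (expMeasure lam)) (jumpKernel lam p) n) :
    HasExpHoldingTimes lam P := by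
  have := isProbabilityMeasure_expMeasure hlam
  have hstep (n : ℕ) : HasLaw (fun ω ↦ (ω n).2) (expMeasure lam) P ∧
      IndepFun (fun ω ↦ ((fun i : Fin n ↦ ω i), (ω n).1)) (fun ω ↦ (ω n).2) P := by
    have hpath : HasLaw (fun ω (i : Fin (n + 1)) ↦ ω i)
        (pathMeasure (π.prod (expMeasure lam)) (jumpKernel lam p) n) P :=
      ⟨Measurable.aemeasurable (by fun_prop), HP n⟩
    obtain ⟨ρ, hρ⟩ := exists_hasLaw_prod_expMeasure_pathMeasure (π := π) (p := p) hlam n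
    exact hasLaw_and_indepFun_of_hasLaw_prod (hρ.comp hpath)
  refine ⟨fun n ↦ (hstep n).1, fun n ↦ ?_⟩
  have hJ : Measurable fun q : (Fin n → 𝒳 × ℝ) × 𝒳 ↦ (q.2, ∑ i, (q.1 i).2) := by fun_prop
  simpa only [Function.comp_def, id, jumpTime, Finset.sum_range] using
    (hstep n).2.comp hJ measurable_id

end JumpChain

end

/-- Time-integral identity for the pure-jump process: for measurable `F : 𝒳 → [0,∞]`
and `t ≥ 0`, `Σ_n E[F(X^J_n) 1_{J_{n+1} ≤ t}] = λ E[∫₀^t F(X_s) ds]`. -/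
theorem jump_process_time_integral {𝒳 : Type*} [MeasurableSpace 𝒳]
    [TopologicalSpace 𝒳] [PolishSpace 𝒳] [BorelSpace 𝒳]
    (lam : ℝ) (hlam : 0 < lam)
    (p : Kernel 𝒳 𝒳) [IsMarkovKernel p]
    (π : Measure 𝒳) [IsProbabilityMeasure π]
    (Pπ : Measure (ℕ → 𝒳 × ℝ)) [IsProbabilityMeasure Pπ]
    (HP : ∀ n : ℕ, Pπ.map (fun ω (i : Fin (n + 1)) => ω i) =
      pathMeasure (π.prod (ProbabilityTheory.expMeasure lam)) (jumpKernel lam p) n)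
    (F : 𝒳 → ℝ≥0∞) (hF : Measurable F) (t : ℝ) (ht : 0 ≤ t) :
    ∑' n : ℕ, ∫⁻ ω, (if jumpTime (n + 1) ω ≤ t then F ((ω n).1) else 0) ∂Pπ =
      ENNReal.ofReal lam * ∫⁻ ω, (∫⁻ s in Set.Icc (0 : ℝ) t, F (jumpProc s ω)) ∂Pπ :=
  jump_process_time_integral_general hlam (hasExpHoldingTimes_of_map_eq_pathMeasure hlam HP) hF t
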